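/- arXiv:1205.5213 — 9 statements merged into one kernel-verified Lean document; each statement's English description precedes it below -/
import Mathlib

section
/- Let A be an additive frieze with first row a : ℤ → ℝ. Then for all integers r ≤ s, A(r,s) = (∑_{i=r}^{s} a(i)) − t_{s−r}, where t_m = m(m+1)/2 is the m-th triangular number. -/
/-- An additive frieze: a map `A` on pairs of integers determined by its first
row `a : ℤ → ℝ` via `A r r = a r`, `A r (r+1) = a r + a (r+1) - 1`, and the
unimodular rule for `s ≥ r + 2`. -/
def IsAdditiveFrieze (A : ℤ → ℤ → ℝ) (a : ℤ → ℝ) : Prop :=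
  (∀ r : ℤ, A r r = a r) ∧
  (∀ r : ℤ, A r (r + 1) = a r + a (r + 1) - 1) ∧
  (∀ r s : ℤ, r + 2 ≤ s → A r s = A r (s - 1) + A (r + 1) s - A (r + 1) (s - 1) - 1)

/-- The `m`-th triangular number `m (m + 1) / 2`, as a real number. -/
noncomputable def tri (m : ℤ) : ℝ := (m : ℝ) * ((m : ℝ) + 1) / 2
/-- Consecutive entries on a diagonal of an additive frieze differ by a first-row entry minus the
distance to the first row. -/
theorem IsAdditiveFrieze.entry_succ {A : ℤ → ℤ → ℝ} {a : ℤ → ℝ} (hA : IsAdditiveFrieze A a)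
    (n : ℕ) (r : ℤ) : A r (r + n + 1) = A r (r + n) + a (r + n + 1) - (n + 1) := by
  obtain ⟨h_diag, h_next, h_rule⟩ := hA
  induction n generalizing r with
  | zero => simp [h_diag, h_next]
  | succ n ih =>
    have h := h_rule r (r + 1 + n + 1) (by omega)
    rw [add_sub_cancel_right, ih (r + 1)] at h
    have e : r + ((n + 1 : ℕ) : ℤ) = r + 1 + n := by push_cast; ring
    rw [e, h]
    push_cast
    ring

/-- For an additive frieze, `A r s = (∑_{i=r}^{s} a i) - t_{s-r}`. -/
theorem frieze_entry_eq_sum_sub_triangular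
    (A : ℤ → ℤ → ℝ) (a : ℤ → ℝ) (hA : IsAdditiveFrieze A a) :
    ∀ r s : ℤ, r ≤ s → A r s = (∑ i ∈ Finset.Icc r s, a i) - tri (s - r) := by
  intro r s hrs
  obtain ⟨n, rfl⟩ := Int.le.dest hrs
  induction n with
  | zero => simp [hA.1, tri]
  | succ n ih =>
    have h_sum : ∑ i ∈ Finset.Icc r (r + n + 1), a i
        = (∑ i ∈ Finset.Icc r (r + n), a i) + a (r + n + 1) := by
      rw [← Finset.insert_Icc_right_eq_Icc_add_one (by omega), Finset.sum_insert (by simp), add_comm]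
    rw [Nat.cast_succ, ← add_assoc, hA.entry_succ, ih (by omega), h_sum]
    simp only [tri]
    push_cast
    ring
end

section
/- Let A be an additive frieze with first row a : ℤ → ℝ and let n ≥ 2 be an integer. Then row n of the frieze is a row of zeros (i.e., A(r, r+n−1) = 0 for all r ∈ ℤ) if and only if the sum of any n consecutive first-row values equals t_{n−1}, i.e., ∑_{i=r}^{r+n−1} a(i) = t_{n−1} for every r ∈ ℤ. -/
/-- Moving one step along a diagonal of an additive frieze adds the next first-row value, up to
the length of the diagonal. -/
theorem IsAdditiveFrieze.apply_add_one {A : ℤ → ℤ → ℝ} {a : ℤ → ℝ} (hA : IsAdditiveFrieze A a)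
    (k : ℕ) (r : ℤ) : A r (r + k + 1) = A r (r + k) + a (r + k + 1) - (k + 1) := by
  obtain ⟨hdiag, hsnd, hrule⟩ := hA
  induction k generalizing r with
  | zero => simp [hdiag, hsnd]
  | succ k ih =>
    have h := hrule r (r + k + 2) (by omega)
    have ih' := ih (r + 1)
    rw [show r + 1 + (k : ℤ) + 1 = r + k + 2 by ring,
      show r + 1 + (k : ℤ) = r + k + 1 by ring] at ih'
    rw [show r + (k : ℤ) + 2 - 1 = r + k + 1 by ring] at h
    push_cast
    rw [show r + ((k : ℤ) + 1) + 1 = r + k + 2 by ring,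
      show r + ((k : ℤ) + 1) = r + k + 1 by ring]
    linarith

/-- Closed form for the entries of an additive frieze. -/
theorem IsAdditiveFrieze.apply_eq_sum_sub_tri {A : ℤ → ℤ → ℝ} {a : ℤ → ℝ}
    (hA : IsAdditiveFrieze A a) (k : ℕ) (r : ℤ) :
    A r (r + k) = ∑ i ∈ Finset.Icc r (r + k), a i - tri k := by
  induction k with
  | zero => simp [hA.1, tri]
  | succ k ih =>
    have hsum : ∑ i ∈ Finset.Icc r (r + k + 1), a i
        = ∑ i ∈ Finset.Icc r (r + k), a i + a (r + k + 1) := by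
      have hIcc : Finset.Icc r (r + k + 1) = insert (r + k + 1) (Finset.Icc r (r + k)) := by
        ext i
        simp only [Finset.mem_insert, Finset.mem_Icc]
        omega
      rw [hIcc, Finset.sum_insert (by simp), add_comm]
    rw [Nat.cast_succ, ← add_assoc, hsum, hA.apply_add_one, ih]
    simp only [tri]
    push_cast
    ring

/-- Row `n` of an additive frieze is a row of zeros iff the sum of any `n`
consecutive first-row values equals `t_{n-1}`. -/
theorem frieze_row_zero_iff_consecutive_sums
    (A : ℤ → ℤ → ℝ) (a : ℤ → ℝ) (hA : IsAdditiveFrieze A a)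
    (n : ℤ) (hn : 2 ≤ n) :
    (∀ r : ℤ, A r (r + n - 1) = 0) ↔
      (∀ r : ℤ, (∑ i ∈ Finset.Icc r (r + n - 1), a i) = tri (n - 1)) := by
  obtain ⟨k, hk⟩ := Int.eq_ofNat_of_zero_le (show 0 ≤ n - 1 by omega)
  refine forall_congr' fun r => ?_
  rw [add_sub_assoc, hk, hA.apply_eq_sum_sub_tri, sub_eq_zero]
end

section
/- Let A be an additive frieze with first row a : ℤ → ℝ and let n ≥ 2 be an integer. If row n of the frieze is a row of zeros (A(r, r+n−1) = 0 for all r ∈ ℤ), then the first row is n-periodic: a(k + n) = a(k) for every k ∈ ℤ. -/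
/-- Consecutive entries along a descending diagonal differ by a shifted entry of the first row. -/
theorem IsAdditiveFrieze.sub_left {A : ℤ → ℤ → ℝ} {a : ℤ → ℝ} (hA : IsAdditiveFrieze A a)
    (m : ℕ) (r : ℤ) : A r (r + m + 1) - A r (r + m) = a (r + m + 1) - (m + 1) := by
  obtain ⟨h0, h1, h2⟩ := hA
  induction m generalizing r with
  | zero => simp [h0, h1]; ring
  | succ m ih =>
    have h := h2 r (r + m + 2) (by omega)
    have hi := ih (r + 1)
    push_cast
    rw [show r + m + 2 - 1 = r + m + 1 by ring] at h
    rw [show r + 1 + m + 1 = r + m + 2 by ring, show r + 1 + m = r + m + 1 by ring] at hi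
    rw [show r + (m + 1) + 1 = r + m + 2 by ring, show r + ((m : ℤ) + 1) = r + m + 1 by ring]
    linarith

/-- Consecutive entries along an ascending diagonal differ by a shifted entry of the first row. -/
theorem IsAdditiveFrieze.sub_right {A : ℤ → ℤ → ℝ} {a : ℤ → ℝ} (hA : IsAdditiveFrieze A a)
    (m : ℕ) (r : ℤ) : A r (r + m + 1) - A (r + 1) (r + m + 1) = a r - (m + 1) := by
  obtain ⟨h0, h1, h2⟩ := hA
  induction m with
  | zero => simp [h0, h1]; ring
  | succ m ih =>
    have h := h2 r (r + m + 2) (by omega)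
    push_cast
    rw [show r + m + 2 - 1 = r + m + 1 by ring] at h
    rw [show r + (m + 1) + 1 = r + m + 2 by ring]
    linarith

/-- If row `n` of an additive frieze is a row of zeros, then the first row is
`n`-periodic. -/
theorem first_row_periodic_of_row_zero
    (A : ℤ → ℤ → ℝ) (a : ℤ → ℝ) (hA : IsAdditiveFrieze A a)
    (n : ℤ) (hn : 2 ≤ n)
    (hrow : ∀ r : ℤ, A r (r + n - 1) = 0) :
    ∀ k : ℤ, a (k + n) = a k := by
  intro k
  obtain ⟨m, rfl⟩ : ∃ m : ℕ, n = m + 1 := ⟨(n - 1).toNat, by omega⟩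
  have hl := hA.sub_left m k
  have hr := hA.sub_right m k
  have z0 := hrow k
  have z1 := hrow (k + 1)
  rw [show k + (m + 1) - 1 = k + m by ring] at z0
  rw [show k + 1 + (m + 1) - 1 = k + m + 1 by ring] at z1
  rw [show k + (m + 1) = k + m + 1 by ring]
  linarith
end

section
/- Let A be an additive frieze with first row a : ℤ → ℝ and let n ≥ 2 be an integer. If row n of the frieze is a row of zeros (A(r, r+n−1) = 0 for all r ∈ ℤ), then the whole frieze is invariant under translation by n positions: A(r+n, s+n) = A(r,s) for all integers r ≤ s. -/
/-- Moving the right end of an entry one step to the right. -/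
theorem IsAdditiveFrieze.right_step {A : ℤ → ℤ → ℝ} {a : ℤ → ℝ} (hA : IsAdditiveFrieze A a)
    (k : ℕ) (r s : ℤ) (hs : s = r + k + 1) : A r s = A r (s - 1) + a s - (k + 1) := by
  obtain ⟨hdiag, hsnd, hrule⟩ := hA
  induction k generalizing r with
  | zero =>
    obtain rfl : s = r + 1 := by simpa using hs
    rw [hsnd, add_sub_cancel_right, hdiag]
    simp
  | succ k ih =>
    have hstep := ih (r + 1) (by push_cast at hs; linarith)
    have hdiamond := hrule r s (by push_cast at hs; omega)
    push_cast
    linarith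

/-- Moving the left end of an entry one step to the left. -/
theorem IsAdditiveFrieze.left_step {A : ℤ → ℤ → ℝ} {a : ℤ → ℝ} (hA : IsAdditiveFrieze A a)
    (k : ℕ) (r s : ℤ) (hs : s = r + k + 1) : A r s = A (r + 1) s + a r - (k + 1) := by
  obtain ⟨hdiag, hsnd, hrule⟩ := hA
  induction k generalizing s with
  | zero =>
    obtain rfl : s = r + 1 := by simpa using hs
    rw [hsnd, hdiag]
    simp [add_comm]
  | succ k ih =>
    have hstep := ih (s - 1) (by push_cast at hs; linarith)
    have hdiamond := hrule r s (by push_cast at hs; omega)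
    push_cast
    linarith

/-- If row `n ≥ 1` vanishes, the first row is `n`-periodic. -/
theorem IsAdditiveFrieze.first_row_periodic {A : ℤ → ℤ → ℝ} {a : ℤ → ℝ}
    (hA : IsAdditiveFrieze A a) {n : ℤ} (hn : 1 ≤ n) (hrow : ∀ r : ℤ, A r (r + n - 1) = 0)
    (r : ℤ) : a (r + n) = a r := by
  obtain ⟨k, hk⟩ := Int.eq_ofNat_of_zero_le (sub_nonneg.mpr hn)
  have hright := hA.right_step k r (r + n) (by linarith)
  have hleft := hA.left_step k r (r + n) (by linarith)
  have hzero := hrow (r + 1)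
  rw [show r + 1 + n - 1 = r + n by ring] at hzero
  linarith [hrow r]

/-- A frieze whose first row is `n`-periodic is invariant under translation by `n`. -/
theorem IsAdditiveFrieze.translation_invariant {A : ℤ → ℤ → ℝ} {a : ℤ → ℝ}
    (hA : IsAdditiveFrieze A a) {n : ℤ} (ha : ∀ r : ℤ, a (r + n) = a r) {r s : ℤ}
    (hrs : r ≤ s) : A (r + n) (s + n) = A r s := by
  obtain ⟨k, hk⟩ := Int.eq_ofNat_of_zero_le (sub_nonneg.mpr hrs)
  induction k generalizing s with
  | zero =>
    obtain rfl : s = r := by simpa [sub_eq_zero] using hk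
    rw [hA.1, hA.1, ha]
  | succ k ih =>
    push_cast at hk
    have hprev := ih (s := s - 1) (by omega) (by linarith)
    have hstep := hA.right_step k r s (by linarith)
    have hshift := hA.right_step k (r + n) (s + n) (by linarith)
    rw [show s + n - 1 = s - 1 + n by ring] at hshift
    linarith [ha s]

/-- If row `n` of an additive frieze is a row of zeros, then the whole frieze
is invariant under translation by `n` positions. -/
theorem frieze_translation_invariant_of_row_zero
    (A : ℤ → ℤ → ℝ) (a : ℤ → ℝ) (hA : IsAdditiveFrieze A a)
    (n : ℤ) (hn : 2 ≤ n)
    (hrow : ∀ r : ℤ, A r (r + n - 1) = 0) :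
    ∀ r s : ℤ, r ≤ s → A (r + n) (s + n) = A r s := by
  intro r s hrs
  exact hA.translation_invariant (hA.first_row_periodic (by linarith) hrow) hrs
end

section
/- Let A be an additive frieze with first row a : ℤ → ℝ and let n ≥ 2 be an integer. Suppose row n of the frieze is a row of zeros (A(r, r+n−1) = 0 for all r ∈ ℤ), and suppose the frieze admits a slice of zeros: there exist integers p_0, p_1, …, p_{n−2} with p_{j+1} = p_j or p_{j+1} = p_j − 1 for each 0 ≤ j ≤ n−3, such that A(p_j, p_j + j) = 0 for every 0 ≤ j ≤ n−2. Then every entry A(r,s) with 0 ≤ s − r ≤ n−1 is a nonnegative integer. -/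
namespace IsAdditiveFrieze

variable {A : ℤ → ℤ → ℝ} {a : ℤ → ℝ}

theorem extend_right (hA : IsAdditiveFrieze A a) (k : ℕ) (r : ℤ) :
    A r (r + k + 1) = A r (r + k) + a (r + k + 1) - (k + 1) := by
  obtain ⟨h0, h1, h2⟩ := hA
  induction k generalizing r with
  | zero => simp [h0, h1]
  | succ k ih =>
    have h := h2 r (r + (k + 1 : ℕ) + 1) (by push_cast; lia)
    have e := ih (r + 1)
    rw [show r + 1 + (k : ℤ) = r + (k + 1 : ℕ) by push_cast; ring] at e
    rw [add_sub_cancel_right] at h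
    push_cast at *
    linarith

theorem extend_left (hA : IsAdditiveFrieze A a) (k : ℕ) (r : ℤ) :
    A r (r + k + 1) = a r + A (r + 1) (r + k + 1) - (k + 1) := by
  obtain ⟨h0, h1, h2⟩ := hA
  induction k generalizing r with
  | zero => simp [h0, h1]
  | succ k ih =>
    have h := h2 r (r + (k + 1 : ℕ) + 1) (by push_cast; lia)
    have e := ih r
    rw [show r + (k : ℤ) + 1 = r + (k + 1 : ℕ) by push_cast; ring] at e
    rw [add_sub_cancel_right] at h
    push_cast at *
    linarith

/-- Every entry is a sum of consecutive first-row entries minus a triangular number. -/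
theorem eq_sum_sub (hA : IsAdditiveFrieze A a) (k : ℕ) (r : ℤ) :
    A r (r + k) = ∑ i ∈ Finset.range (k + 1), a (r + i) - ∑ i ∈ Finset.range (k + 1), (i : ℝ) := by
  induction k with
  | zero => simp [hA.1]
  | succ k ih =>
    have h := hA.extend_right k r
    rw [Finset.sum_range_succ, Finset.sum_range_succ (fun i : ℕ => (i : ℝ))]
    push_cast
    rw [← add_assoc]
    linarith

/-- A row of zeros makes the first row periodic. -/
theorem periodic (hA : IsAdditiveFrieze A a) (k : ℕ) (hrow : ∀ r : ℤ, A r (r + k) = 0) :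
    Function.Periodic a (k + 1 : ℤ) := by
  intro r
  have hr := hA.extend_right k r
  have hl := hA.extend_left k r
  have h := hrow (r + 1)
  rw [hrow r] at hr
  rw [show r + 1 + (k : ℤ) = r + k + 1 by ring] at h
  rw [← add_assoc]
  linarith

end IsAdditiveFrieze

/-- On the `k + 1` integers starting at `u`, the function `a` takes distinct values
in `{0, …, k}`. -/
def IsWindowPermutation (a : ℤ → ℝ) (u : ℤ) (k : ℕ) : Prop :=
  (∀ i, u ≤ i → i ≤ u + k → ∃ m : ℕ, m ≤ k ∧ a i = m) ∧
  (∀ i j, u ≤ i → i ≤ u + k → u ≤ j → j ≤ u + k → a i = a j → i = j)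

namespace IsWindowPermutation

variable {a : ℤ → ℝ} {u : ℤ} {k : ℕ}

/-- Enlarging a window by one integer `x` with value `k + 1`. -/
theorem enlarge (h : IsWindowPermutation a u k) {v x : ℤ} (hx : a x = k + 1)
    (hmem : ∀ i, v ≤ i → i ≤ v + (k + 1 : ℕ) → i = x ∨ (u ≤ i ∧ i ≤ u + k)) :
    IsWindowPermutation a v (k + 1) := by
  have hne : ∀ i, u ≤ i → i ≤ u + k → a i ≠ a x := by
    intro i h1 h2 e
    obtain ⟨m, hm, e'⟩ := h.1 i h1 h2
    rw [e', hx] at e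
    have : m = k + 1 := by exact_mod_cast e
    lia
  constructor
  · intro i h1 h2
    rcases hmem i h1 h2 with rfl | ⟨h3, h4⟩
    · exact ⟨k + 1, le_rfl, by rw [hx]; push_cast; rfl⟩
    · obtain ⟨m, hm, e⟩ := h.1 i h3 h4
      exact ⟨m, by lia, e⟩
  · intro i j hi1 hi2 hj1 hj2 e
    rcases hmem i hi1 hi2 with rfl | ⟨h3, h4⟩ <;> rcases hmem j hj1 hj2 with rfl | ⟨h5, h6⟩
    · rfl
    · exact absurd e.symm (hne j h5 h6)
    · exact absurd e (hne i h3 h4)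
    · exact h.2 i j h3 h4 h5 h6 e

end IsWindowPermutation

/-- A slice of zeros of length `k + 1` ends over a window on which the first row
is a permutation of `{0, …, k}`. -/
theorem IsAdditiveFrieze.isWindowPermutation {A : ℤ → ℤ → ℝ} {a : ℤ → ℝ}
    (hA : IsAdditiveFrieze A a) (p : ℤ → ℤ) (k : ℕ)
    (hadj : ∀ j : ℕ, j < k → p (j + 1) = p j ∨ p (j + 1) = p j - 1)
    (hzero : ∀ j : ℕ, j ≤ k → A (p j) (p j + j) = 0) :
    IsWindowPermutation a (p k) k := by
  induction k with
  | zero =>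
    have h := hzero 0 le_rfl
    simp only [Nat.cast_zero, add_zero, hA.1] at h
    constructor
    · intro i h1 h2
      have : i = p 0 := by push_cast at *; lia
      exact ⟨0, le_rfl, by rw [this, h]; simp⟩
    · intros
      push_cast at *
      lia
  | succ k ih =>
    have hk := ih (fun j hj => hadj j (by lia)) (fun j hj => hzero j (by lia))
    have z := hzero k (by lia)
    have z' := hzero (k + 1) le_rfl
    push_cast at z' ⊢
    rcases hadj k (by lia) with e | e <;> rw [e] at z' ⊢
    · have h := hA.extend_right k (p k)
      rw [← add_assoc] at z'
      refine hk.enlarge (x := p k + k + 1) (by linarith) ?_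
      intro i h1 h2
      push_cast at h2
      lia
    · have h := hA.extend_left k (p k - 1)
      rw [show p k - 1 + (k : ℤ) + 1 = p k + k by ring, sub_add_cancel] at h
      rw [show p k - 1 + ((k : ℤ) + 1) = p k + k by ring] at z'
      refine hk.enlarge (x := p k - 1) (by linarith) ?_
      intro i h1 h2
      push_cast at h2
      lia

/-- A sum of `k` distinct natural numbers is at least `0 + 1 + ⋯ + (k - 1)`. -/
theorem Finset.sum_range_le_sum_of_injOn (f : ℕ → ℕ) (k : ℕ)
    (hf : Set.InjOn f (Finset.range k)) :
    ∑ i ∈ Finset.range k, i ≤ ∑ i ∈ Finset.range k, f i := by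
  have hf' : Set.InjOn (fun i => (f i : ℤ)) (Finset.range k) :=
    fun i hi j hj e => hf hi hj (Int.ofNat_inj.mp e)
  have h := Finset.sum_range_le_sum (s := (Finset.range k).image fun i => (f i : ℤ)) (c := 0)
    (by simp)
  rw [Finset.sum_image hf', Finset.card_image_of_injOn hf'] at h
  zify
  simpa using h

/-- If an additive frieze with `n + 1` rows admits a slice of zeros, then all
its entries are nonnegative integers. -/
theorem frieze_nonneg_integers_of_zero_slice
    (A : ℤ → ℤ → ℝ) (a : ℤ → ℝ) (hA : IsAdditiveFrieze A a)
    (n : ℤ) (hn : 2 ≤ n)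
    (hrow : ∀ r : ℤ, A r (r + n - 1) = 0)
    (p : ℤ → ℤ)
    (hadj : ∀ j : ℤ, 0 ≤ j → j ≤ n - 3 → p (j + 1) = p j ∨ p (j + 1) = p j - 1)
    (hzero : ∀ j : ℤ, 0 ≤ j → j ≤ n - 2 → A (p j) (p j + j) = 0) :
    ∀ r s : ℤ, 0 ≤ s - r → s - r ≤ n - 1 → ∃ m : ℕ, A r s = (m : ℝ) := by
  obtain ⟨k, rfl⟩ : ∃ k : ℕ, n = k + 2 := ⟨(n - 2).toNat, by lia⟩
  have hrow' : ∀ r : ℤ, A r (r + (k + 1 : ℕ)) = 0 := fun r => by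
    have h := hrow r
    rwa [show r + ((k : ℤ) + 2) - 1 = r + (k + 1 : ℕ) by push_cast; ring] at h
  have hper := hA.periodic (k + 1) hrow'
  have hw : IsWindowPermutation a (p k) (k + 1) := by
    refine (hA.isWindowPermutation p k (fun j hj => hadj j (by lia) (by lia))
      (fun j hj => hzero j (by lia) (by lia))).enlarge (x := p k + k + 1) ?_ ?_
    · have h := hA.extend_right k (p k)
      have h0 := hzero k (by lia) (by lia)
      have h1 := hrow' (p k)
      push_cast at h1
      rw [← add_assoc] at h1
      linarith
    · intro i h1 h2
      push_cast at h2
      lia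
  have hpos : (0 : ℤ) < ((k + 1 : ℕ) : ℤ) + 1 := by lia
  have hrep : ∀ i : ℤ, ∃ i' c : ℤ, p k ≤ i' ∧ i' ≤ p k + (k + 1 : ℕ) ∧
      i = i' + c * (((k + 1 : ℕ) : ℤ) + 1) ∧ a i = a i' := by
    intro i
    have e := Int.emod_add_mul_ediv (i - p k) (((k + 1 : ℕ) : ℤ) + 1)
    have h1 := Int.emod_nonneg (i - p k) hpos.ne'
    have h2 := Int.emod_lt_of_pos (i - p k) hpos
    have e' : i = p k + (i - p k) % (((k + 1 : ℕ) : ℤ) + 1) +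
        (i - p k) / (((k + 1 : ℕ) : ℤ) + 1) * (((k + 1 : ℕ) : ℤ) + 1) := by linarith
    refine ⟨_, _, by linarith, by lia, e', ?_⟩
    conv_lhs => rw [e']
    exact hper.int_mul _ _
  have hnat : ∀ i : ℤ, ∃ m : ℕ, a i = m := by
    intro i
    obtain ⟨i', c, h1, h2, -, e⟩ := hrep i
    obtain ⟨m, -, hm⟩ := hw.1 i' h1 h2
    exact ⟨m, e.trans hm⟩
  choose f hf using hnat
  intro r s h0 h1
  obtain ⟨l, rfl⟩ : ∃ l : ℕ, s = r + l := ⟨(s - r).toNat, by lia⟩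
  have hinj : Set.InjOn (fun i : ℕ => f (r + i)) (Finset.range (l + 1)) := by
    intro i hi j hj e
    simp only [Finset.coe_range, Set.mem_Iio] at hi hj
    have e' : a (r + i) = a (r + j) := by
      rw [hf, hf]
      exact_mod_cast e
    obtain ⟨i', c, hi1, hi2, hi3, hi4⟩ := hrep (r + i)
    obtain ⟨j', d, hj1, hj2, hj3, hj4⟩ := hrep (r + j)
    have hij := hw.2 i' j' hi1 hi2 hj1 hj2 (by rw [← hi4, ← hj4, e'])
    have hdvd : (((k + 1 : ℕ) : ℤ) + 1) ∣ (i : ℤ) - j :=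
      ⟨c - d, by linear_combination hi3 - hj3 + hij⟩
    have := Int.eq_zero_of_abs_lt_dvd hdvd (by rw [abs_lt]; constructor <;> push_cast <;> lia)
    lia
  have hle := Finset.sum_range_le_sum_of_injOn _ _ hinj
  refine ⟨∑ i ∈ Finset.range (l + 1), f (r + i) - ∑ i ∈ Finset.range (l + 1), i, ?_⟩
  rw [hA.eq_sum_sub, Nat.cast_sub hle]
  simp [hf]
end

section
/- Let A be an additive frieze with first row a : ℤ → ℝ and let n ≥ 2 be an integer. Suppose a is n-periodic (a(k+n) = a(k) for all k ∈ ℤ) and the values a(0), a(1), …, a(n−1) are a permutation of the integers 0, 1, …, n−1. Then A(r, r+n−1) = 0 for all r ∈ ℤ (the frieze has n+1 rows), and every entry A(r,s) with 0 ≤ s − r ≤ n−1 is a nonnegative integer. -/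
/-- The closed form of an additive frieze: a sum of first-row entries minus a triangular number. -/
theorem IsAdditiveFrieze.apply_add_natCast {A : ℤ → ℤ → ℝ} {a : ℤ → ℝ}
    (hA : IsAdditiveFrieze A a) (k : ℕ) :
    ∀ r : ℤ, A r (r + k) = ∑ i ∈ Finset.range (k + 1), a (r + i) - tri k := by
  obtain ⟨h₀, h₁, h₂⟩ := hA
  induction k using Nat.twoStepInduction with
  | zero => simp [h₀, tri]
  | one =>
    intro r
    simp [h₁, tri, Finset.sum_range_succ]
  | more k ih ih' =>
    intro r
    have e := h₂ r (r + (k + 2 : ℕ)) (by push_cast; omega)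
    have e₁ : r + ((k + 2 : ℕ) : ℤ) - 1 = r + (k + 1 : ℕ) := by push_cast; ring
    have e₂ : r + ((k + 2 : ℕ) : ℤ) = r + 1 + (k + 1 : ℕ) := by push_cast; ring
    have e₃ : r + ((k + 1 : ℕ) : ℤ) = r + 1 + (k : ℕ) := by push_cast; ring
    have hright := ih' (r + 1)
    rw [← e₂, Finset.sum_range_succ] at hright
    have htop := ih (r + 1)
    rw [← e₃] at htop
    rw [e, e₁, ih' r, hright, htop, Finset.sum_range_succ _ (k + 2), e₂]
    simp only [tri]
    push_cast
    ring

/-- The sum of `n` pairwise distinct natural numbers is at least `0 + 1 + ⋯ + (n - 1)`. -/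
theorem Finset.sum_range_card_le_sum_id (s : Finset ℕ) :
    ∑ i ∈ Finset.range s.card, i ≤ ∑ i ∈ s, i := by
  induction s using Finset.induction_on_max with
  | empty => simp
  | insert m s hm ih =>
    have hms : m ∉ s := fun h => (hm m h).false
    have hcard : s.card ≤ m := by
      simpa using Finset.card_le_card (t := Finset.range m) fun x hx => by simpa using hm x hx
    rw [Finset.card_insert_of_notMem hms, Finset.sum_insert hms, Finset.sum_range_succ]
    omega

theorem tri_natCast (k : ℕ) : tri k = ((∑ i ∈ Finset.range (k + 1), i : ℕ) : ℝ) := by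
  have h := Finset.sum_range_id_mul_two (k + 1)
  have h' : ((∑ i ∈ Finset.range (k + 1), i : ℕ) : ℝ) * 2 = (k + 1) * k := by
    exact_mod_cast h
  simp only [tri]
  push_cast at h' ⊢
  linarith

/-- A periodic sequence whose period is a permutation of `0, 1, …, n - 1` takes values in
`{0, 1, …, n - 1}`, and takes distinct values on every window of length `n`. -/
theorem exists_nat_lift_of_periodic {a : ℤ → ℝ} {n : ℕ} (hn : 0 < n)
    (hper : ∀ k : ℤ, a (k + n) = a k) (σ : Equiv.Perm (Fin n))
    (hperm : ∀ i : Fin n, a (i : ℤ) = ((σ i : ℕ) : ℝ)) :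
    ∃ b : ℤ → ℕ, (∀ r, a r = b r) ∧ (∀ r, b r < n) ∧
      ∀ r : ℤ, Set.InjOn (fun i : ℕ => b (r + i)) (Finset.range n) := by
  have hn' : (0 : ℤ) < n := by exact_mod_cast hn
  have hnonneg (r : ℤ) : 0 ≤ r % n := Int.emod_nonneg r hn'.ne'
  have hlt (r : ℤ) : (r % n).toNat < n := by
    have := Int.emod_lt_of_pos r hn'
    have := hnonneg r
    omega
  refine ⟨fun r => σ ⟨(r % n).toNat, hlt r⟩, fun r => ?_, fun r => Fin.isLt _, ?_⟩
  · rw [← hperm]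
    have hp : Function.Periodic a (n : ℤ) := hper
    have h := hp.int_mul (r / n) (r % n)
    simp only [Int.toNat_of_nonneg (hnonneg r)]
    rw [← h, Int.cast_id, Int.emod_add_ediv_mul]
  · intro r i hi j hj hij
    simp only [Finset.coe_range, Set.mem_Iio] at hi hj
    have h := congrArg Fin.val (σ.injective (Fin.ext hij))
    have h₁ : (r + i) % (n : ℤ) = (r + j) % n := by
      have := hnonneg (r + i)
      have := hnonneg (r + j)
      simp only at h
      omega
    have h₂ : (i : ℤ) ≡ j [ZMOD n] := Int.ModEq.add_left_cancel' r h₁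
    exact Nat.ModEq.eq_of_lt_of_lt (Int.natCast_modEq_iff.mp h₂) hi hj

/-- If the first row of an additive frieze is `n`-periodic and a period is a
permutation of `0, 1, …, n - 1`, then row `n` is a row of zeros and all
entries of the frieze are nonnegative integers. -/
theorem frieze_of_permutation_first_row
    (A : ℤ → ℤ → ℝ) (a : ℤ → ℝ) (hA : IsAdditiveFrieze A a)
    (n : ℕ) (hn : 2 ≤ n)
    (hper : ∀ k : ℤ, a (k + n) = a k)
    (σ : Equiv.Perm (Fin n)) (hperm : ∀ i : Fin n, a (i : ℤ) = ((σ i : ℕ) : ℝ)) :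
    (∀ r : ℤ, A r (r + n - 1) = 0) ∧
      (∀ r s : ℤ, 0 ≤ s - r → s - r ≤ (n : ℤ) - 1 → ∃ m : ℕ, A r s = (m : ℝ)) := by
  obtain ⟨b, hab, hb, hinj⟩ := exists_nat_lift_of_periodic (by omega) hper σ hperm
  have key (r : ℤ) (k : ℕ) : A r (r + k) = ((∑ i ∈ Finset.range (k + 1), b (r + i) : ℕ) : ℝ) -
      ((∑ i ∈ Finset.range (k + 1), i : ℕ) : ℝ) := by
    rw [hA.apply_add_natCast, tri_natCast]
    simp [hab]
  constructor
  · intro r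
    have himage : (Finset.range n).image (fun i : ℕ => b (r + i)) = Finset.range n := by
      refine Finset.eq_of_subset_of_card_le ?_ (Finset.card_image_of_injOn (hinj r)).ge
      intro x hx
      obtain ⟨i, -, rfl⟩ := Finset.mem_image.mp hx
      exact Finset.mem_range.mpr (hb _)
    have hsum : ∑ i ∈ Finset.range n, b (r + i) = ∑ i ∈ Finset.range n, i := by
      conv_rhs => rw [← himage]
      exact (Finset.sum_image (f := fun x => x) (hinj r)).symm
    have h := key r (n - 1)
    rwa [Nat.sub_add_cancel (by omega), hsum, sub_self, Nat.cast_sub (by omega), Nat.cast_one,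
      ← add_sub_assoc] at h
  · intro r s h₀ h₁
    obtain ⟨k, hk⟩ := Int.eq_ofNat_of_zero_le h₀
    obtain rfl : s = r + k := by omega
    have hinj' : Set.InjOn (fun i : ℕ => b (r + i)) (Finset.range (k + 1)) :=
      (hinj r).mono (Finset.coe_subset.mpr (Finset.range_mono (by omega)))
    have hle := Finset.sum_range_card_le_sum_id
      ((Finset.range (k + 1)).image fun i : ℕ => b (r + i))
    rw [Finset.card_image_of_injOn hinj', Finset.sum_image hinj', Finset.card_range] at hle
    exact ⟨_, by rw [key, Nat.cast_sub hle]⟩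
end

section
/- Let n ≥ 3 be an integer and let a : ℤ → ℝ be (n−1)-periodic with ∑_{i=r}^{r+n−2} a(i) = t_{n−2} for every r ∈ ℤ (so a is the first row of an additive frieze with n rows). Define b : ℤ → ℝ to be the n-periodic function with b(0) = n−1 and b(i) = a(i−1) for 1 ≤ i ≤ n−1 (inserting the value n−1 into each period of the first row). Then ∑_{i=r}^{r+n−1} b(i) = t_{n−1} for every r ∈ ℤ; that is, b is the first row of an additive frieze with n+1 rows. -/
/-- The sum of a `n`-periodic function over `n` consecutive integers does not depend on where the
window starts. -/
theorem sum_Icc_period_eq {M : Type*} [AddCommMonoid M] {n : ℤ} (hn : 1 ≤ n) {f : ℤ → M}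
    (hf : ∀ k, f (k + n) = f k) (r : ℤ) :
    ∑ i ∈ Finset.Icc r (r + n - 1), f i = ∑ i ∈ Finset.Icc 0 (n - 1), f i := by
  have shift (r : ℤ) : ∑ i ∈ Finset.Icc (r + 1) (r + 1 + n - 1), f i =
      ∑ i ∈ Finset.Icc r (r + n - 1), f i := by
    have hl : Finset.Icc r (r + n - 1) = insert r (Finset.Icc (r + 1) (r + n - 1)) := by
      ext; simp only [Finset.mem_insert, Finset.mem_Icc]; omega
    have hr : Finset.Icc (r + 1) (r + 1 + n - 1) =
        insert (r + n) (Finset.Icc (r + 1) (r + n - 1)) := by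
      ext; simp only [Finset.mem_insert, Finset.mem_Icc]; omega
    rw [hl, hr, Finset.sum_insert (by simp), Finset.sum_insert (by simp), hf]
  induction r using Int.induction_on with
  | zero => simp
  | succ k ih => rw [shift, ih]
  | pred k ih => rw [← shift, sub_add_cancel, ih]

/-- Inserting the value `n - 1` into each period of the first row of an
additive frieze with `n` rows yields the first row of an additive frieze with
`n + 1` rows. -/
theorem insert_row_value_gives_frieze
    (n : ℤ) (hn : 3 ≤ n) (a : ℤ → ℝ)
    (haper : ∀ k : ℤ, a (k + (n - 1)) = a k)
    (hasum : ∀ r : ℤ, (∑ i ∈ Finset.Icc r (r + n - 2), a i) = tri (n - 2))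
    (b : ℤ → ℝ)
    (hbper : ∀ k : ℤ, b (k + n) = b k)
    (hb0 : b 0 = ((n : ℝ) - 1))
    (hbi : ∀ i : ℤ, 1 ≤ i → i ≤ n - 1 → b i = a (i - 1)) :
    ∀ r : ℤ, (∑ i ∈ Finset.Icc r (r + n - 1), b i) = tri (n - 1) := by
  intro r
  have hsplit : Finset.Icc 0 (n - 1) = insert 0 (Finset.Icc 1 (n - 1)) := by
    ext; simp only [Finset.mem_insert, Finset.mem_Icc]; omega
  have hrow : ∑ i ∈ Finset.Icc 1 (n - 1), b i = ∑ i ∈ Finset.Icc 0 (0 + n - 2), a i := by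
    refine Finset.sum_bij' (fun i _ => i - 1) (fun i _ => i + 1) ?_ ?_ ?_ ?_ ?_
    · intro i hi; simp only [Finset.mem_Icc] at hi ⊢; omega
    · intro i hi; simp only [Finset.mem_Icc] at hi ⊢; omega
    · simp
    · simp
    · intro i hi
      rw [Finset.mem_Icc] at hi
      exact hbi i hi.1 hi.2
  rw [sum_Icc_period_eq (by omega) hbper, hsplit, Finset.sum_insert (by simp), hb0, hrow, hasum]
  simp only [tri]
  push_cast
  ring
end

section
/- Let n ≥ 3 be an integer and let a : ℤ → ℝ be (n−1)-periodic with ∑_{i=r}^{r+n−2} a(i) = t_{n−2} for every r ∈ ℤ, and suppose moreover that every a(i) is an integer and that ∑_{i=r}^{r+s} a(i) ≥ t_s for every r ∈ ℤ and every 0 ≤ s ≤ n−2 (so the additive frieze with n rows determined by a consists of nonnegative integers). Define b : ℤ → ℝ to be the n-periodic function with b(0) = n−1 and b(i) = a(i−1) for 1 ≤ i ≤ n−1. Then every b(i) is an integer and ∑_{i=r}^{r+s} b(i) ≥ t_s for every r ∈ ℤ and every 0 ≤ s ≤ n−1; consequently the additive frieze with n+1 rows determined by b consists of nonnegative integers.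 -/
theorem sum_Icc_eq_sum_Icc_add {f g : ℤ → ℝ} {r s r' s' : ℤ} (c : ℤ)
    (hr : r + c = r') (hs : s + c = s') (h : ∀ i, r ≤ i → i ≤ s → f i = g (i + c)) :
    ∑ i ∈ Finset.Icc r s, f i = ∑ i ∈ Finset.Icc r' s', g i := by
  subst hr hs
  rw [← Finset.map_add_right_Icc, Finset.sum_map]
  exact Finset.sum_congr rfl fun i hi => h i (Finset.mem_Icc.1 hi).1 (Finset.mem_Icc.1 hi).2

theorem sum_Icc_add_sum_Icc (f : ℤ → ℝ) {r m s : ℤ} (hr : r ≤ m) (hs : m ≤ s + 1) :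
    ∑ i ∈ Finset.Icc r (m - 1), f i + ∑ i ∈ Finset.Icc m s, f i =
      ∑ i ∈ Finset.Icc r s, f i := by
  rw [← Finset.sum_union]
  · congr 1
    ext i
    simp only [Finset.mem_union, Finset.mem_Icc]
    omega
  · rw [Finset.disjoint_left]
    intro i
    simp only [Finset.mem_Icc]
    omega

theorem sum_Icc_eq_add_sum_Icc (f : ℤ → ℝ) {r s : ℤ} (h : r ≤ s) :
    ∑ i ∈ Finset.Icc r s, f i = f r + ∑ i ∈ Finset.Icc (r + 1) s, f i := by
  have := sum_Icc_add_sum_Icc f (show r ≤ r + 1 by omega) (show r + 1 ≤ s + 1 by omega)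
  simpa using this.symm

theorem exists_int_eq_tri (k : ℤ) : ∃ m : ℤ, tri k = m := by
  obtain ⟨m, hm⟩ := Int.even_mul_succ_self k
  refine ⟨m, ?_⟩
  have : (k : ℝ) * (k + 1) = m + m := by exact_mod_cast hm
  rw [tri, this]
  ring

/-- The entries of an additive frieze in terms of its first row. -/
theorem IsAdditiveFrieze.eq_sum_sub_tri {A : ℤ → ℤ → ℝ} {a : ℤ → ℝ}
    (h : IsAdditiveFrieze A a) {r s : ℤ} (hrs : r ≤ s) :
    A r s = ∑ i ∈ Finset.Icc r s, a i - tri (s - r) := by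
  obtain ⟨h0, h1, h2⟩ := h
  obtain ⟨k, rfl⟩ := Int.le.dest hrs
  clear hrs
  induction k using Nat.strong_induction_on generalizing r with
  | _ k ih =>
    match k with
    | 0 => simp [h0, tri]
    | 1 =>
      rw [sum_Icc_eq_add_sum_Icc a (by simp)]
      simp [h1, tri]
    | k + 2 =>
      have e1 := ih (k + 1) (by omega) (r := r)
      have e2 := ih (k + 1) (by omega) (r := r + 1)
      have e3 := ih k (by omega) (r := r + 1)
      have s1 := sum_Icc_eq_add_sum_Icc a (show r ≤ r + (k + 1 : ℕ) by omega)
      have s2 := sum_Icc_eq_add_sum_Icc a (show r ≤ r + (k + 2 : ℕ) by omega)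
      rw [h2 r _ (by push_cast; omega)]
      rw [show r + 1 + ((k + 1 : ℕ) : ℤ) = r + (k + 2 : ℕ) by push_cast; ring] at e2
      rw [show r + 1 + (k : ℤ) = r + (k + 1 : ℕ) by push_cast; ring] at e3
      rw [show r + ((k + 2 : ℕ) : ℤ) - 1 = r + (k + 1 : ℕ) by push_cast; ring, e1, e2, e3, s1, s2]
      simp only [tri]
      push_cast
      ring

/-- Translating by a multiple of the period moves any point into `[1, n]`. -/
theorem exists_shift_mem_Icc {b : ℤ → ℝ} {n : ℤ} (hn : 0 < n) (hb : ∀ k, b (k + n) = b k)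
    (r : ℤ) : ∃ c, 1 ≤ r + c ∧ r + c ≤ n ∧ ∀ i, b i = b (i + c) := by
  have hper : Function.Periodic b n := hb
  refine ⟨-((r - 1) / n) * n, ?_, ?_, fun i => ?_⟩
  · have := Int.emod_nonneg (r - 1) hn.ne'
    have := Int.mul_ediv_add_emod (r - 1) n
    linarith
  · have := Int.emod_lt_of_pos (r - 1) hn
    have := Int.mul_ediv_add_emod (r - 1) n
    linarith
  · simpa using (hper.int_mul (-((r - 1) / n)) i).symm

/-- Inserting the value `n - 1` into each period of the first row of an
additive frieze with `n` rows consisting of nonnegative integers yields the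
first row of an additive frieze with `n + 1` rows consisting of nonnegative
integers. -/
theorem insert_row_value_preserves_nonneg_integers
    (n : ℤ) (hn : 3 ≤ n) (a : ℤ → ℝ)
    (haper : ∀ k : ℤ, a (k + (n - 1)) = a k)
    (hasum : ∀ r : ℤ, (∑ i ∈ Finset.Icc r (r + n - 2), a i) = tri (n - 2))
    (haint : ∀ i : ℤ, ∃ m : ℤ, a i = (m : ℝ))
    (hage : ∀ r s : ℤ, 0 ≤ s → s ≤ n - 2 →
      tri s ≤ ∑ i ∈ Finset.Icc r (r + s), a i)
    (b : ℤ → ℝ)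
    (hbper : ∀ k : ℤ, b (k + n) = b k)
    (hb0 : b 0 = ((n : ℝ) - 1))
    (hbi : ∀ i : ℤ, 1 ≤ i → i ≤ n - 1 → b i = a (i - 1)) :
    (∀ i : ℤ, ∃ m : ℤ, b i = (m : ℝ)) ∧
      (∀ r s : ℤ, 0 ≤ s → s ≤ n - 1 →
        tri s ≤ ∑ i ∈ Finset.Icc r (r + s), b i) ∧
      (∀ B : ℤ → ℤ → ℝ, IsAdditiveFrieze B b →
        ∀ r s : ℤ, 0 ≤ s - r → s - r ≤ n - 1 → ∃ m : ℕ, B r s = (m : ℝ)) := by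
  have hbn : b n = (n : ℝ) - 1 := by rw [← hb0, ← hbper 0, zero_add]
  have hint : ∀ i : ℤ, ∃ m : ℤ, b i = (m : ℝ) := by
    intro i
    obtain ⟨c, h1, h2, hc⟩ := exists_shift_mem_Icc (by omega) hbper i
    rw [hc i]
    rcases h2.eq_or_lt with h | h
    · exact ⟨n - 1, by rw [h, hbn]; push_cast; ring⟩
    · rw [hbi _ h1 (by omega)]
      exact haint _
  have hge : ∀ r s : ℤ, 0 ≤ s → s ≤ n - 1 → tri s ≤ ∑ i ∈ Finset.Icc r (r + s), b i := by
    intro r s hs hsn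
    obtain ⟨c, h1, h2, hc⟩ := exists_shift_mem_Icc (by omega) hbper r
    rw [sum_Icc_eq_sum_Icc_add (g := b) c rfl rfl fun i _ _ => hc i,
      show r + s + c = r + c + s by ring]
    generalize r + c = q at h1 h2
    rcases le_or_gt (q + s) (n - 1) with h | h
    · rw [sum_Icc_eq_sum_Icc_add (g := a) (-1) (r' := q - 1) (s' := q - 1 + s) (by ring) (by ring)
        fun i _ _ => hbi i (by omega) (by omega)]
      exact hage _ _ hs (by omega)
    · have hleft : ∑ i ∈ Finset.Icc q (n - 1), b i =
          ∑ i ∈ Finset.Icc (q - 1) (n - 1 - 1), a i :=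
        sum_Icc_eq_sum_Icc_add (-1) (by ring) (by ring) fun i _ _ => hbi i (by omega) (by omega)
      have hright : ∑ i ∈ Finset.Icc (n + 1) (q + s), b i =
          ∑ i ∈ Finset.Icc (n - 1) (q + s - 2), a i := by
        refine sum_Icc_eq_sum_Icc_add (-2) (by ring) (by ring) fun i _ _ => ?_
        have hi : b i = a (i - n - 1) := by
          rw [← hbi (i - n) (by omega) (by omega), ← hbper (i - n), sub_add_cancel]
        rw [hi, ← haper]
        congr 1
        ring
      rw [← sum_Icc_add_sum_Icc b h2 (by omega), sum_Icc_eq_add_sum_Icc b (r := n) (by omega),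
        hleft, hright, hbn]
      have hjoin := sum_Icc_add_sum_Icc a (r := q - 1) (m := n - 1) (s := q + s - 2)
        (by omega) (by omega)
      have hbound : tri (s - 1) ≤ ∑ i ∈ Finset.Icc (q - 1) (q + s - 2), a i := by
        rcases hs.eq_or_lt with rfl | hs
        · rw [Finset.Icc_eq_empty (by omega)]
          simp [tri]
        · convert hage (q - 1) (s - 1) (by omega) (by omega) using 3
          ring
      have htri : tri s = tri (s - 1) + s := by
        simp only [tri]
        push_cast
        ring
      have hsn' : (s : ℝ) ≤ n - 1 := by exact_mod_cast hsn
      linarith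
  refine ⟨hint, hge, fun B hB r s h0 hs => ?_⟩
  have hBrs := hB.eq_sum_sub_tri (show r ≤ s by omega)
  have hnonneg := hge r (s - r) h0 hs
  rw [add_sub_cancel] at hnonneg
  choose β hβ using hint
  obtain ⟨t, ht⟩ := exists_int_eq_tri (s - r)
  have hBint : B r s = ((∑ i ∈ Finset.Icc r s, β i - t : ℤ) : ℝ) := by
    rw [hBrs, ht, Finset.sum_congr rfl fun i _ => hβ i]
    push_cast
    rfl
  have hpos : 0 ≤ ∑ i ∈ Finset.Icc r s, β i - t := by
    have : 0 ≤ B r s := by linarith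
    rw [hBint] at this
    exact_mod_cast this
  obtain ⟨m, hm⟩ := Int.eq_ofNat_of_zero_le hpos
  exact ⟨m, by rw [hBint, hm]; simp⟩
end

section
/- Let A be an additive frieze with first row a : ℤ → ℝ. Then for all integers r, j, k, s with r < j ≤ k < s, A(j,k) + A(r,s) = A(j,s) + A(r,k) − (j − r)(s − k). (Here (j−r)(s−k) is the area of the parallelogram in the frieze with vertices A(j,k), A(j,s), A(r,s), A(r,k), when each elementary diamond is given area 1.) -/
/-- The parallelogram rule for two adjacent diagonals. -/
theorem IsAdditiveFrieze.adjacent_diagonals {A : ℤ → ℤ → ℝ} {a : ℤ → ℝ}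
    (hA : IsAdditiveFrieze A a) {r k s : ℤ} (hrk : r + 1 ≤ k) (hks : k ≤ s) :
    A (r + 1) k + A r s = A (r + 1) s + A r k - ((s : ℝ) - k) := by
  induction s, hks using Int.leInduction with
  | base => ring
  | succ s hks ih =>
    have h := hA.2.2 r (s + 1) (by omega)
    rw [add_sub_cancel_right] at h
    push_cast
    linarith

/-- The parallelogram rule for additive friezes:
`A j k + A r s = A j s + A r k - (j - r) (s - k)`. -/
theorem frieze_parallelogram_rule
    (A : ℤ → ℤ → ℝ) (a : ℤ → ℝ) (hA : IsAdditiveFrieze A a) :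
    ∀ r j k s : ℤ, r < j → j ≤ k → k < s →
      A j k + A r s = A j s + A r k - ((j - r : ℤ) : ℝ) * ((s - k : ℤ) : ℝ) := by
  intro r j k s hrj hjk hks
  induction j, hrj.le using Int.leInduction with
  | base => simp [add_comm]
  | succ j hle ih =>
    have h := hA.adjacent_diagonals hjk hks.le
    rcases hle.eq_or_lt with rfl | hlt
    · push_cast
      linarith
    · have ih := ih hlt (by omega)
      push_cast at ih ⊢
      linarith
end
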